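/- Let I be a finite index set, M₁, …, M_N : I → ℝ binary masks (each Mₙ(i) ∈ {0,1}), and G = Σₙ Mₙ. Let φ₀, φ₁, φ₂, … be linear maps with φₜ : ℝ^{t+1} → ℝ, defining at each step t the elementwise linear optimizer fₜ(g⁽ᵗ⁾, …, g⁽⁰⁾)(i) = φₜ(g⁽ᵗ⁾(i), …, g⁽⁰⁾(i)). Fix an arbitrary gradient sequence g⁽⁰⁾, g⁽¹⁾, … : I → ℝ and learning rates λ⁽⁰⁾, λ⁽¹⁾, … ∈ ℝ. Define branch trajectories Wₙ⁽ᵗ⁺¹⁾ = Wₙ⁽ᵗ⁾ − λ⁽ᵗ⁾ · fₜ(Mₙ ⊙ g⁽ᵗ⁾, …, Mₙ ⊙ g⁽⁰⁾) and a merged trajectory Ŵ⁽⁰⁾ = Σₙ Mₙ ⊙ Wₙ⁽⁰⁾, Ŵ⁽ᵗ⁺¹⁾ = Ŵ⁽ᵗ⁾ − λ⁽ᵗ⁾ · fₜ(G ⊙ g⁽ᵗ⁾, …, G ⊙ g⁽⁰⁾). Then for every t ≥ 0, Σₙ Mₙ ⊙ Wₙ⁽ᵗ⁾ = Ŵ⁽ᵗ⁾: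 training the N-branch reparameterization with a linear optimizer is equivalent, at every step, to training the single merged convolution with gradients scaled elementwise by the spatial gradient scaling G. -/

import Mathlib

/-!
A coordinatewise optimizer is linear not only over the scalars but over the whole ring of functions
`I → ℝ`, to which the masks belong. Hence a mask comes out of the optimizer, and branch `n`
contributes its mask twice to the merged update: once from its masked gradients and once from the
merging. The effective scaling is therefore `∑ n, M n * M n`, which is `∑ n, M n` for binary masks.
-/

section ElementwiseOptimizer

variable {R J : Type*} [Semiring R]

/-- The elementwise optimizer on `I → R` that applies the linear map `φ` at each coordinate
`i : I` to the values at `i` of a `J`-indexed gradient history. It is bundled as a linear map over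
the ring `I → R`, so that linearity includes compatibility with masks. -/
def elementwiseOptimizer (I : Type*) (φ : (J → R) →ₗ[R] R) :
    (J → I → R) →ₗ[I → R] (I → R) where
  toFun h i := φ fun j => h j i
  map_add' h h' := funext fun i => map_add φ (fun j => h j i) fun j => h' j i
  map_smul' m h := funext fun i => map_smul φ (m i) fun j => h j i

end ElementwiseOptimizer

section Reparameterization

variable {ι S A X : Type*} [Fintype ι] [Semiring A] [AddCommGroup X] [Module A X]
  [DistribSMul S X] [SMulCommClass S A X]

theorem sum_smul_map_smul {Y : Type*} [AddCommMonoid Y] [Module A Y]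
    (M : ι → A) (f : Y →ₗ[A] X) (h : Y) :
    ∑ n, M n • f (M n • h) = f ((∑ n, M n * M n) • h) := by
  simp only [map_smul, smul_smul, ← Finset.sum_smul]

theorem sum_smul_sub_smul_map_smul {Y : Type*} [AddCommMonoid Y] [Module A Y]
    (M : ι → A) (W : ι → X) (c : S) (f : Y →ₗ[A] X) (h : Y) :
    ∑ n, M n • (W n - c • f (M n • h)) =
      ∑ n, M n • W n - c • f ((∑ n, M n * M n) • h) := by
  simp only [smul_sub, Finset.sum_sub_distrib, ← smul_comm c, ← Finset.smul_sum,
    sum_smul_map_smul]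

theorem sgs_trajectory_equivalence_general
    (M : ι → A) (G : A) (hG : G = ∑ n, M n * M n)
    (f : (t : ℕ) → (Fin (t + 1) → X) →ₗ[A] X)
    (g : ℕ → X) (lam : ℕ → S)
    (Wb : ι → ℕ → X)
    (hWb : ∀ n t, Wb n (t + 1) = Wb n t - lam t • f t (fun j => M n • g j))
    (Wmerged : ℕ → X)
    (hW0 : Wmerged 0 = ∑ n, M n • Wb n 0)
    (hWstep : ∀ t, Wmerged (t + 1) = Wmerged t - lam t • f t (fun j => G • g j)) (t : ℕ) :
    ∑ n, M n • Wb n t = Wmerged t := by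
  subst hG
  induction t with
  | zero => exact hW0.symm
  | succ t ih =>
    let history : Fin (t + 1) → X := fun j => g j
    calc ∑ n, M n • Wb n (t + 1)
        = ∑ n, M n • (Wb n t - lam t • f t (M n • history)) := by
          simp only [hWb, history, Pi.smul_def]
      _ = ∑ n, M n • Wb n t - lam t • f t ((∑ n, M n * M n) • history) :=
          sum_smul_sub_smul_map_smul M (Wb · t) (lam t) (f t) history
      _ = Wmerged (t + 1) := by simp only [ih, hWstep, history, Pi.smul_def]

end Reparameterization

theorem isIdempotentElem_of_forall_eq_zero_or_one {I R : Type*} [MulZeroOneClass R] {m : I → R}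
    (hm : ∀ i, m i = 0 ∨ m i = 1) : IsIdempotentElem m :=
  funext fun i => by rcases hm i with h | h <;> simp [h]

/-- Training an `N`-branch reparameterization (binary masks `M n`,
branch weights `Wb n t`) with elementwise linear optimizers `fₜ` — given coordinatewise by
linear maps `φ t : ℝ^(t+1) → ℝ` applied to the masked gradient history — is equivalent,
at every step `t`, to training the single merged convolution `Ŵ` with gradients scaled
elementwise by the spatial gradient scaling `G = ∑ n, M n`:
`∑ n, M n ⊙ Wb n t = Ŵ t` for all `t`. -/
theorem sgs_trajectory_equivalence
    {I : Type*} [Fintype I] {N : ℕ}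
    (M : Fin N → I → ℝ)
    (hM : ∀ n i, M n i = 0 ∨ M n i = 1)
    (G : I → ℝ) (hG : G = ∑ n, M n)
    (φ : (t : ℕ) → (Fin (t + 1) → ℝ) →ₗ[ℝ] ℝ)
    (g : ℕ → I → ℝ)
    (lam : ℕ → ℝ)
    (Wb : Fin N → ℕ → I → ℝ)
    (hWb : ∀ n t, Wb n (t + 1)
        = Wb n t - lam t • (fun i => φ t (fun j : Fin (t + 1) => (M n * g j) i)))
    (Wmerged : ℕ → I → ℝ)
    (hW0 : Wmerged 0 = ∑ n, M n * Wb n 0)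
    (hWstep : ∀ t, Wmerged (t + 1)
        = Wmerged t - lam t • (fun i => φ t (fun j : Fin (t + 1) => (G * g j) i))) :
    ∀ t, ∑ n, M n * Wb n t = Wmerged t := by
  have hG' : G = ∑ n, M n * M n := hG.trans <| Finset.sum_congr rfl fun n _ =>
    (isIdempotentElem_of_forall_eq_zero_or_one (hM n)).eq.symm
  exact sgs_trajectory_equivalence_general M G hG' (fun t => elementwiseOptimizer I (φ t))
    g lam Wb hWb Wmerged hW0 hWstep
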